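/- Let G be a finite non-cyclic nilpotent group whose order is not a prime power. Then the diameter of the difference graph D(G) equals 2 if and only if the exponent of G is a square-free positive integer. -/

import Mathlib

/-- Adjacency in the difference of the enhanced power graph and the power graph:
`⟨x, y⟩` is cyclic but neither of `x`, `y` is a power of the other. -/
def diffAdj {G : Type*} [Group G] (x y : G) : Prop :=
  IsCyclic (Subgroup.closure ({x, y} : Set G)) ∧
    (¬ ∃ k : ℤ, y = x ^ k) ∧ (¬ ∃ k : ℤ, x = y ^ k)

/-- The vertex set of the difference graph `𝒟(G)`: the elements of `G` that are
non-isolated in the difference of the enhanced power graph and the power graph. -/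
abbrev DiffVertex (G : Type*) [Group G] := {x : G // ∃ y, diffAdj x y}

/-- The difference graph `𝒟(G)` of a group `G`. -/
def diffGraph (G : Type*) [Group G] : SimpleGraph (DiffVertex G) :=
  SimpleGraph.fromRel (fun a b => diffAdj a.val b.val)

/-- A dominating set of a graph: every vertex is in `S` or adjacent to a vertex of `S`. -/
def IsDominatingSet {V : Type*} (Γ : SimpleGraph V) (S : Set V) : Prop :=
  ∀ v : V, v ∈ S ∨ ∃ u ∈ S, Γ.Adj u v

/-- The domination number of a graph: the least size of a dominating set. -/
noncomputable def dominationNumber {V : Type*} (Γ : SimpleGraph V) : ℕ :=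
  sInf {n : ℕ | ∃ S : Set V, IsDominatingSet Γ S ∧ S.ncard = n}

/-- A maximal cyclic subgroup: a cyclic subgroup not properly contained in
another cyclic subgroup. -/
def IsMaxCyclic {G : Type*} [Group G] (C : Subgroup G) : Prop :=
  IsCyclic C ∧ ∀ D : Subgroup G, IsCyclic D → C ≤ D → C = D

/-!
Once elements of coprime order commute, `G` has elements of every order dividing its exponent `N`,
and two elements of a common finite cyclic subgroup are adjacent exactly when neither order divides
the other. So adjacency is governed by divisibility among the divisors of `N`.

If `N` is square-free, then any neighbour of `x` has order dividing `N`, so the order of a vertex is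
neither `1` nor `N`; two vertices of orders `a` and `b` with `lcm a b ≠ N` have a common neighbour
of order `N / lcm a b`, and two with `lcm a b = N` are adjacent or have a common neighbour of order
`(a / gcd a b) * (b / gcd a b)`. If `p ^ 2 ∣ N` for a prime `p` and `m` is the prime-to-`p` part of
`N`, vertices of orders `p` and `p * m` are at distance at least `3`: a neighbour of the first has
order prime to `p`, hence dividing `m`, and so is not a neighbour of the second.
-/

open Subgroup

section Graph

variable {V : Type*} {Γ : SimpleGraph V}

theorem diam_eq_two_iff :
    Γ.diam = 2 ↔ (∃ u v, u ≠ v ∧ ¬ Γ.Adj u v) ∧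
      ∀ u v, u ≠ v → ¬ Γ.Adj u v → (Γ.commonNeighbors u v).Nonempty := by
  have one_lt_iff : 1 < Γ.ediam ↔ ∃ u v, u ≠ v ∧ ¬ Γ.Adj u v := by
    simp only [← not_le, SimpleGraph.ediam_le_iff, SimpleGraph.edist_le_one_iff_adj_or_eq,
      not_forall, not_or, and_comm, ne_eq]
  have le_two_iff : Γ.ediam ≤ 2 ↔
      ∀ u v, u ≠ v → ¬ Γ.Adj u v → (Γ.commonNeighbors u v).Nonempty := by
    simp only [SimpleGraph.ediam_le_iff, ← not_lt (b := Γ.edist _ _),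
      SimpleGraph.two_lt_edist_iff, not_and, ← ne_eq, Set.nonempty_iff_ne_empty]
  rw [← one_lt_iff, ← le_two_iff, SimpleGraph.diam, ENat.toNat_eq_iff two_ne_zero,
    ← Order.add_one_le_iff_of_not_isMax (by simp), one_add_one_eq_two, and_comm]
  exact le_antisymm_iff

end Graph

section Order

variable {G : Type*} [Group G] {g x y : G}

theorem isCyclic_closure_pair_of_mem_zpowers (hx : x ∈ zpowers g) (hy : y ∈ zpowers g) :
    IsCyclic (closure {x, y}) :=
  isCyclic_of_le ((closure_le (zpowers g)).2 (Set.pair_subset hx hy))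

theorem mem_zpowers_of_isCyclic_closure_pair (hxy : IsCyclic (closure {x, y}))
    (hy : IsOfFinOrder y) (hdvd : orderOf x ∣ orderOf y) : x ∈ zpowers y := by
  obtain ⟨g, hg⟩ := (Subgroup.isCyclic_iff_exists_zpowers_eq_top _).1 hxy
  have hxg : x ∈ zpowers g := hg ▸ subset_closure (by simp)
  have hyg : y ∈ zpowers g := hg ▸ subset_closure (by simp)
  have hpow : ∀ z ∈ closure {x, y}, z ^ orderOf y = 1 := by
    intro z hz
    induction hz using closure_induction with
    | mem z hz =>
      rcases hz with rfl | rfl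
      exacts [orderOf_dvd_iff_pow_eq_one.1 hdvd, pow_orderOf_eq_one z]
    | one => exact one_pow _
    | inv z _ hz => rw [inv_pow, hz, inv_one]
    | mul z w hz' hw' hz hw =>
      obtain ⟨i, rfl⟩ := mem_zpowers_iff.1 (hg ▸ hz')
      obtain ⟨j, rfl⟩ := mem_zpowers_iff.1 (hg ▸ hw')
      rw [((Commute.refl g).zpow_zpow i j).mul_pow, hz, hw, one_mul]
  have hgy : orderOf g ∣ orderOf y := orderOf_dvd_of_pow_eq_one (hpow g (hg ▸ mem_zpowers g))
  have hgen : zpowers y = zpowers g := by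
    have : Finite (zpowers g) := Nat.finite_of_card_ne_zero <| by
      rw [Nat.card_zpowers]
      exact ne_zero_of_dvd_ne_zero hy.orderOf_pos.ne' hgy
    refine eq_of_le_of_card_ge (zpowers_le.2 hyg) ?_
    simpa only [Nat.card_zpowers] using Nat.le_of_dvd hy.orderOf_pos hgy
  exact hgen ▸ hxg

theorem left_mem_zpowers_mul_of_coprime (hcomm : Commute x y)
    (hco : (orderOf x).Coprime (orderOf y)) : x ∈ zpowers (x * y) := by
  obtain ⟨m, hm⟩ := exists_pow_eq_self_of_coprime hco.symm
  have hpow : (x * y) ^ orderOf y = x ^ orderOf y := by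
    rw [hcomm.mul_pow, pow_orderOf_eq_one, mul_one]
  have hmem : ((x * y) ^ orderOf y) ^ m ∈ zpowers (x * y) :=
    pow_mem (pow_mem (mem_zpowers _) _) m
  rwa [hpow, hm] at hmem

theorem right_mem_zpowers_mul_of_coprime (hcomm : Commute x y)
    (hco : (orderOf x).Coprime (orderOf y)) : y ∈ zpowers (x * y) :=
  hcomm.eq ▸ left_mem_zpowers_mul_of_coprime hcomm.symm hco.symm

theorem isPrimePow_card_of_isPrimePow_exponent [Finite G] (h : IsPrimePow (Monoid.exponent G)) :
    IsPrimePow (Nat.card G) := by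
  obtain ⟨p, k, hp, hk, hexp⟩ := (isPrimePow_nat_iff _).1 h
  have : Fact p.Prime := ⟨hp⟩
  have : Nontrivial G := by
    rw [← not_subsingleton_iff_nontrivial, ← Monoid.exp_eq_one_iff, ← hexp]
    exact (Nat.one_lt_pow hk.ne' hp.one_lt).ne'
  obtain ⟨n, hn, hcard⟩ :=
    (isPGroup_iff_exponent_eq_pow.2 ⟨k, hexp.symm⟩).nontrivial_iff_card.1 ‹_›
  exact (isPrimePow_nat_iff _).2 ⟨p, n, hp, hn, hcard.symm⟩

end Order

section CoprimeOrders

open scoped commutatorElement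

/-- Elements of coprime orders commute. For a finite group this is equivalent to nilpotency; it
replaces nilpotency so that infinite groups of finite exponent are covered as well. -/
def CoprimeOrdersCommute (G : Type*) [Group G] : Prop :=
  ∀ ⦃x y : G⦄, (orderOf x).Coprime (orderOf y) → Commute x y

variable {G : Type*} [Group G]

theorem orderOf_commutatorElement_dvd_right {x y : G} (h : ⁅x, y⁆ ∈ center G) :
    orderOf ⁅x, y⁆ ∣ orderOf y := by
  apply orderOf_dvd_of_pow_eq_one
  have hcomm : Commute ⁅x, y⁆ y := (mem_center_iff.1 h y).symm
  calc ⁅x, y⁆ ^ orderOf y = (⁅x, y⁆ * y) ^ orderOf y := by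
        rw [hcomm.mul_pow, pow_orderOf_eq_one, mul_one]
    _ = (x * y * x⁻¹) ^ orderOf y := by rw [commutatorElement_def, inv_mul_cancel_right]
    _ = 1 := by rw [conj_pow, pow_orderOf_eq_one, mul_one, mul_inv_cancel]

theorem orderOf_commutatorElement_dvd_left {x y : G} (h : ⁅x, y⁆ ∈ center G) :
    orderOf ⁅x, y⁆ ∣ orderOf x := by
  rw [← commutatorElement_inv, inv_mem_iff] at h
  rw [← commutatorElement_inv, orderOf_inv]
  exact orderOf_commutatorElement_dvd_right h

theorem coprimeOrdersCommute_of_isNilpotent [Group.IsNilpotent G] : CoprimeOrdersCommute G := by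
  refine Group.nilpotent_center_quotient_ind (P := fun G _ _ => CoprimeOrdersCommute G) G
    (fun G _ _ x y _ => Subsingleton.elim _ _) fun G _ _ ih x y hco => ?_
  let π := QuotientGroup.mk' (center G)
  have hπ : Commute (π x) (π y) :=
    ih ((hco.coprime_dvd_left (orderOf_map_dvd π x)).coprime_dvd_right (orderOf_map_dvd π y))
  have hcenter : ⁅x, y⁆ ∈ center G := by
    rw [← QuotientGroup.ker_mk' (center G), MonoidHom.mem_ker, map_commutatorElement]
    exact commutatorElement_eq_one_iff_commute.2 hπ
  rw [← commutatorElement_eq_one_iff_commute, ← orderOf_eq_one_iff]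
  exact Nat.eq_one_of_dvd_coprimes hco (orderOf_commutatorElement_dvd_left hcenter)
    (orderOf_commutatorElement_dvd_right hcenter)

theorem CoprimeOrdersCommute.exists_orderOf_eq (hG : CoprimeOrdersCommute G)
    (hexp : Monoid.exponent G ≠ 0) {d : ℕ} (hd : d ∣ Monoid.exponent G) :
    ∃ g : G, orderOf g = d := by
  induction d using Nat.recOnPrimeCoprime with
  | zero => exact absurd (zero_dvd_iff.1 hd) hexp
  | prime_pow p n hp =>
    obtain ⟨g, hg⟩ := hp.exists_orderOf_eq_pow_factorization_exponent G
    have hdvd : p ^ n ∣ orderOf g :=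
      hg ▸ pow_dvd_pow p ((hp.pow_dvd_iff_le_factorization hexp).1 hd)
    exact ⟨_, orderOf_pow_orderOf_div (hg ▸ pow_ne_zero _ hp.ne_zero) hdvd⟩
  | coprime a b _ _ hab iha ihb =>
    obtain ⟨x, rfl⟩ := iha (dvd_of_mul_right_dvd hd)
    obtain ⟨y, rfl⟩ := ihb (dvd_of_mul_left_dvd hd)
    exact ⟨x * y, (hG hab).orderOf_mul_eq_mul_orderOf_of_coprime hab⟩

end CoprimeOrders

section Adjacency

variable {G : Type*} [Group G] {g x y x' y' : G}

theorem diffAdj_of_not_orderOf_dvd (hx : x ∈ zpowers g) (hy : y ∈ zpowers g)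
    (hxy : ¬ orderOf x ∣ orderOf y) (hyx : ¬ orderOf y ∣ orderOf x) : diffAdj x y := by
  refine ⟨isCyclic_closure_pair_of_mem_zpowers hx hy, ?_, ?_⟩
  · rintro ⟨k, rfl⟩
    exact hyx (orderOf_dvd_of_mem_zpowers (zpow_mem_zpowers x k))
  · rintro ⟨k, rfl⟩
    exact hxy (orderOf_dvd_of_mem_zpowers (zpow_mem_zpowers y k))

theorem diffAdj.symm (h : diffAdj x y) : diffAdj y x :=
  ⟨Set.pair_comm x y ▸ h.1, h.2.2, h.2.1⟩

theorem diffAdj.not_orderOf_dvd (h : diffAdj x y) (hy : IsOfFinOrder y) :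
    ¬ orderOf x ∣ orderOf y := fun hdvd =>
  have ⟨k, hk⟩ := mem_zpowers_iff.1 (mem_zpowers_of_isCyclic_closure_pair h.1 hy hdvd)
  h.2.2 ⟨k, hk.symm⟩

theorem diffGraph_adj {x y : DiffVertex G} : (diffGraph G).Adj x y ↔ diffAdj x.1 y.1 := by
  rw [diffGraph, SimpleGraph.fromRel_adj]
  refine ⟨fun h => h.2.elim id diffAdj.symm, fun h => ⟨?_, Or.inl h⟩⟩
  rintro rfl
  exact h.2.1 ⟨1, (zpow_one _).symm⟩

theorem CoprimeOrdersCommute.diffAdj_mul (hG : CoprimeOrdersCommute G) (hx' : x' ∈ zpowers x)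
    (hdvd : ¬ orderOf x ∣ orderOf x') (hco : (orderOf x).Coprime (orderOf y)) (hy : y ≠ 1) :
    diffAdj x (x' * y) := by
  have hco' : (orderOf x').Coprime (orderOf y) :=
    hco.coprime_dvd_left (orderOf_dvd_of_mem_zpowers hx')
  have horder : orderOf (x' * y) = orderOf x' * orderOf y :=
    (hG hco').orderOf_mul_eq_mul_orderOf_of_coprime hco'
  have hx : x ∈ zpowers (x * y) := left_mem_zpowers_mul_of_coprime (hG hco) hco
  refine diffAdj_of_not_orderOf_dvd hx
    (mul_mem (zpowers_le.2 hx hx') (right_mem_zpowers_mul_of_coprime (hG hco) hco)) ?_ ?_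
  · rw [horder]
    exact fun h => hdvd (hco.dvd_of_dvd_mul_right h)
  · rw [horder]
    exact fun h => hy (orderOf_eq_one_iff.1 (hco.symm.eq_one_of_dvd (dvd_of_mul_left_dvd h)))

theorem CoprimeOrdersCommute.diffAdj_of_coprime (hG : CoprimeOrdersCommute G)
    (hco : (orderOf x).Coprime (orderOf y)) (hx : x ≠ 1) (hy : y ≠ 1) : diffAdj x y := by
  have h := hG.diffAdj_mul (one_mem (zpowers x)) (by simpa using hx) hco hy
  rwa [one_mul] at h

theorem CoprimeOrdersCommute.exists_diffAdj_orderOf_eq (hG : CoprimeOrdersCommute G)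
    (hexp : Monoid.exponent G ≠ 0) {d e : ℕ} (hd : d ∣ Monoid.exponent G)
    (he : e ∣ Monoid.exponent G) (hde : ¬ d ∣ e) (hed : ¬ e ∣ d) :
    ∃ x y : G, diffAdj x y ∧ orderOf x = d ∧ orderOf y = e := by
  obtain ⟨g, hg⟩ := hG.exists_orderOf_eq hexp dvd_rfl
  rw [← hg] at hexp hd he
  have hx := orderOf_pow_orderOf_div hexp hd
  have hy := orderOf_pow_orderOf_div hexp he
  exact ⟨_, _, diffAdj_of_not_orderOf_dvd (npow_mem_zpowers g _) (npow_mem_zpowers g _)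
    (by rwa [hx, hy]) (by rwa [hx, hy]), hx, hy⟩

end Adjacency

section CommonNeighbors

variable {G : Type*} [Group G] {x y : G}

theorem diffAdj.ne_one (h : diffAdj x y) : x ≠ 1 := by
  rintro rfl
  exact h.2.2 ⟨0, (zpow_zero y).symm⟩

theorem diffAdj.orderOf_ne_exponent (h : diffAdj x y) (hx : IsOfFinOrder x) :
    orderOf x ≠ Monoid.exponent G := fun hexp =>
  h.symm.not_orderOf_dvd hx (hexp ▸ Monoid.order_dvd_exponent y)

theorem CoprimeOrdersCommute.exists_common_neighbor_of_lcm_ne (hG : CoprimeOrdersCommute G)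
    (hsq : Squarefree (Monoid.exponent G)) (hx : x ≠ 1) (hy : y ≠ 1)
    (hlcm : (orderOf x).lcm (orderOf y) ≠ Monoid.exponent G) :
    ∃ z, diffAdj x z ∧ diffAdj y z := by
  obtain ⟨k, hk⟩ : (orderOf x).lcm (orderOf y) ∣ Monoid.exponent G :=
    Nat.lcm_dvd (Monoid.order_dvd_exponent x) (Monoid.order_dvd_exponent y)
  obtain ⟨z, rfl⟩ := hG.exists_orderOf_eq hsq.ne_zero (hk ▸ dvd_mul_left k _)
  have hco : ((orderOf x).lcm (orderOf y)).Coprime (orderOf z) :=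
    Nat.coprime_of_squarefree_mul (hk ▸ hsq)
  have hz : z ≠ 1 := by
    rintro rfl
    exact hlcm (by rw [hk, orderOf_one, mul_one])
  exact ⟨z, hG.diffAdj_of_coprime (hco.coprime_dvd_left (Nat.dvd_lcm_left _ _)) hx hz,
    hG.diffAdj_of_coprime (hco.coprime_dvd_left (Nat.dvd_lcm_right _ _)) hy hz⟩

theorem CoprimeOrdersCommute.diffAdj_pow_gcd_mul_pow_gcd (hG : CoprimeOrdersCommute G)
    (hx : IsOfFinOrder x) (hy : Squarefree (orderOf y)) (hyx : ¬ orderOf y ∣ orderOf x)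
    (hco : ¬ (orderOf x).Coprime (orderOf y)) :
    diffAdj x (x ^ (orderOf x).gcd (orderOf y) * y ^ (orderOf x).gcd (orderOf y)) := by
  set d := (orderOf x).gcd (orderOf y) with hd
  have hd_pos : 0 < d := Nat.gcd_pos_of_pos_left _ hx.orderOf_pos
  have hxd : orderOf (x ^ d) = orderOf x / d :=
    orderOf_pow_of_dvd hd_pos.ne' (Nat.gcd_dvd_left _ _)
  have hyd : orderOf (y ^ d) = orderOf y / d :=
    orderOf_pow_of_dvd hd_pos.ne' (Nat.gcd_dvd_right _ _)
  refine hG.diffAdj_mul (npow_mem_zpowers x d) ?_ ?_ ?_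
  · rw [hxd]
    exact Nat.not_dvd_of_pos_of_lt (Nat.div_gcd_pos_of_pos_left _ hx.orderOf_pos)
      (Nat.div_lt_self hx.orderOf_pos (by have : d ≠ 1 := hco; lia))
  · rw [hyd, hd, Nat.gcd_comm]
    exact (Nat.coprime_div_gcd_of_squarefree hy hx.orderOf_pos.ne').symm
  · exact fun h => hyx ((orderOf_dvd_of_pow_eq_one h).trans (Nat.gcd_dvd_left _ _))

theorem CoprimeOrdersCommute.exists_common_neighbor_of_not_coprime (hG : CoprimeOrdersCommute G)
    (hx : Squarefree (orderOf x)) (hy : Squarefree (orderOf y)) (hxy : ¬ orderOf x ∣ orderOf y)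
    (hyx : ¬ orderOf y ∣ orderOf x) (hco : ¬ (orderOf x).Coprime (orderOf y)) :
    ∃ z, diffAdj x z ∧ diffAdj y z := by
  set d := (orderOf x).gcd (orderOf y) with hd
  have hxz : diffAdj x (x ^ d * y ^ d) :=
    hG.diffAdj_pow_gcd_mul_pow_gcd (orderOf_ne_zero_iff.1 hx.ne_zero) hy hyx hco
  have hyz : diffAdj y (y ^ d * x ^ d) := by
    rw [hd, Nat.gcd_comm]
    exact hG.diffAdj_pow_gcd_mul_pow_gcd (orderOf_ne_zero_iff.1 hy.ne_zero) hx hxy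
      (mt Nat.Coprime.symm hco)
  have hcomm : Commute (x ^ d) (y ^ d) := hG <| by
    rw [orderOf_pow_of_dvd (Nat.gcd_ne_zero_left hx.ne_zero) (Nat.gcd_dvd_left _ _),
      orderOf_pow_of_dvd (Nat.gcd_ne_zero_left hx.ne_zero) (Nat.gcd_dvd_right _ _)]
    exact Nat.coprime_div_gcd_div_gcd (Nat.gcd_pos_of_pos_left _ hx.ne_zero.bot_lt)
  exact ⟨_, hxz, hcomm.eq ▸ hyz⟩

theorem CoprimeOrdersCommute.diffGraph_commonNeighbors_nonempty (hG : CoprimeOrdersCommute G)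
    (hsq : Squarefree (Monoid.exponent G)) {u v : DiffVertex G} (huv : ¬ (diffGraph G).Adj u v) :
    ((diffGraph G).commonNeighbors u v).Nonempty := by
  suffices ∃ z, diffAdj u.1 z ∧ diffAdj v.1 z by
    obtain ⟨z, huz, hvz⟩ := this
    exact ⟨⟨z, u, huz.symm⟩, diffGraph_adj.2 huz, diffGraph_adj.2 hvz⟩
  obtain ⟨⟨x, x', hx⟩, ⟨y, y', hy⟩⟩ := u, v
  rw [diffGraph_adj] at huv
  by_cases hlcm : (orderOf x).lcm (orderOf y) = Monoid.exponent G
  · have hsq' (z : G) : Squarefree (orderOf z) :=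
      hsq.squarefree_of_dvd (Monoid.order_dvd_exponent z)
    have hfin (z : G) : IsOfFinOrder z := orderOf_ne_zero_iff.1 (hsq' z).ne_zero
    refine hG.exists_common_neighbor_of_not_coprime (hsq' x) (hsq' y) ?_ ?_
      fun hco => huv (hG.diffAdj_of_coprime hco hx.ne_one hy.ne_one)
    · exact fun h => hy.orderOf_ne_exponent (hfin y) (hlcm ▸ (Nat.lcm_eq_right h).symm)
    · exact fun h => hx.orderOf_ne_exponent (hfin x) (hlcm ▸ (Nat.lcm_eq_left h).symm)
  · exact hG.exists_common_neighbor_of_lcm_ne hsq hx.ne_one hy.ne_one hlcm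

end CommonNeighbors

section DistantVertices

theorem exists_prime_ne_dvd_of_not_isPrimePow {n : ℕ} (hn : n ≠ 1) (hpp : ¬ IsPrimePow n) (q : ℕ) :
    ∃ p, p.Prime ∧ p ≠ q ∧ p ∣ n := by
  by_contra! hq
  obtain ⟨p, hp, hpn⟩ := Nat.exists_prime_and_dvd hn
  refine hpp (isPrimePow_iff_unique_prime_dvd.2 ⟨p, ⟨hp, hpn⟩, fun r ⟨hr, hrn⟩ => ?_⟩)
  by_contra hrp
  exact hq r hr (fun hrq => hq p hp (fun hpq => hrp (hrq.trans hpq.symm)) hpn) hrn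

variable {G : Type*} [Group G]

theorem CoprimeOrdersCommute.exists_ne_not_diffGraph_adj (hG : CoprimeOrdersCommute G)
    (hexp : 1 < Monoid.exponent G) (hpp : ¬ IsPrimePow (Monoid.exponent G)) :
    ∃ u v : DiffVertex G, u ≠ v ∧ ¬ (diffGraph G).Adj u v := by
  obtain ⟨p, hp, hp2, hpN⟩ := exists_prime_ne_dvd_of_not_isPrimePow hexp.ne' hpp 2
  obtain ⟨q, hq, hqp, hqN⟩ := exists_prime_ne_dvd_of_not_isPrimePow hexp.ne' hpp p
  obtain ⟨x, hx⟩ := hG.exists_orderOf_eq (by lia) hpN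
  obtain ⟨y, hy⟩ := hG.exists_orderOf_eq (by lia) hqN
  have hadj (z : G) (hz : orderOf z = p) : diffAdj z y := by
    refine hG.diffAdj_of_coprime ?_ ?_ ?_
    · rw [hz, hy]
      exact (Nat.coprime_primes hp hq).2 hqp.symm
    · exact fun h => hp.ne_one (by rw [← hz, h, orderOf_one])
    · exact fun h => hq.ne_one (by rw [← hy, h, orderOf_one])
  have hx_inv : x ≠ x⁻¹ := fun h => hp2 <| by
    have hdvd : p ∣ 2 :=
      hx ▸ orderOf_dvd_of_pow_eq_one (by rw [pow_two, mul_eq_one_iff_eq_inv, ← h])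
    exact (Nat.prime_dvd_prime_iff_eq hp Nat.prime_two).1 hdvd
  refine ⟨⟨x, y, hadj x hx⟩, ⟨x⁻¹, y, hadj x⁻¹ (by rw [orderOf_inv, hx])⟩,
    fun h => hx_inv (congrArg Subtype.val h), fun h => ?_⟩
  exact (diffGraph_adj.1 h).2.1 ⟨-1, (zpow_neg_one x).symm⟩

theorem diffGraph_commonNeighbors_eq_empty (hexp : Monoid.exponent G ≠ 0) {p : ℕ} (hp : p.Prime)
    {u v : DiffVertex G} (hu : orderOf u.1 = p)
    (hv : orderOf v.1 = p * ordCompl[p] (Monoid.exponent G)) :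
    (diffGraph G).commonNeighbors u v = ∅ := by
  refine Set.eq_empty_of_forall_notMem fun ⟨z, _⟩ ⟨huz, hvz⟩ => ?_
  have hfin (g : G) : IsOfFinOrder g := (Monoid.exponent_ne_zero.1 hexp).isOfFinOrder
  have hpz : ¬ p ∣ orderOf z := hu ▸ (diffGraph_adj.1 huz).not_orderOf_dvd (hfin z)
  have hco : (orderOf z).Coprime (ordProj[p] (Monoid.exponent G)) :=
    ((hp.coprime_iff_not_dvd.2 hpz).pow_left _).symm
  have hz : orderOf z ∣ ordCompl[p] (Monoid.exponent G) := hco.dvd_of_dvd_mul_left <| by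
    rw [Nat.ordProj_mul_ordCompl_eq_self]
    exact Monoid.order_dvd_exponent z
  exact (diffGraph_adj.1 hvz).symm.not_orderOf_dvd (hfin v.1) (hv ▸ hz.mul_left p)

theorem CoprimeOrdersCommute.exists_diffGraph_commonNeighbors_eq_empty
    (hG : CoprimeOrdersCommute G) (hexp : Monoid.exponent G ≠ 0)
    (hpp : ¬ IsPrimePow (Monoid.exponent G)) (hsq : ¬ Squarefree (Monoid.exponent G)) :
    ∃ u v : DiffVertex G, u ≠ v ∧ ¬ (diffGraph G).Adj u v ∧
      (diffGraph G).commonNeighbors u v = ∅ := by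
  obtain ⟨p, hp, hpN⟩ : ∃ p, p.Prime ∧ p * p ∣ Monoid.exponent G := by
    simpa [Nat.squarefree_iff_prime_squarefree] using hsq
  set m := ordCompl[p] (Monoid.exponent G)
  have hpm : p.Coprime m := Nat.coprime_ordCompl hp hexp
  have hm1 : m ≠ 1 := fun h => hpp <|
    (exists_ordCompl_eq_one_iff_isPrimePow (by rintro h1; simp [h1] at hsq)).2 ⟨p, hp, h⟩
  have hmp (k : ℕ) : ¬ m ∣ p ^ k := fun h => hm1 ((hpm.pow_left k).symm.eq_one_of_dvd h)
  have hmN : m ∣ Monoid.exponent G := Nat.ordCompl_dvd _ p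
  have hpmN : p * m ∣ Monoid.exponent G :=
    hpm.mul_dvd_of_dvd_of_dvd (dvd_of_mul_right_dvd hpN) hmN
  obtain ⟨x, x', hx, hxp, -⟩ := hG.exists_diffAdj_orderOf_eq hexp (dvd_of_mul_right_dvd hpN) hmN
    (fun h => hp.ne_one (hpm.eq_one_of_dvd h)) (by simpa using hmp 1)
  obtain ⟨y, y', hy, hyp, -⟩ := hG.exists_diffAdj_orderOf_eq hexp hpmN hpN
    (fun h => hmp 1 (by simpa using Nat.dvd_of_mul_dvd_mul_left hp.pos h))
    (fun h => hp.ne_one (hpm.eq_one_of_dvd (Nat.dvd_of_mul_dvd_mul_left hp.pos h)))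
  have hdvd : orderOf x ∣ orderOf y := by
    rw [hxp, hyp]
    exact dvd_mul_right p m
  have hne : x ≠ y := by
    rintro rfl
    exact hm1 (Nat.eq_of_mul_eq_mul_left hp.pos (by rw [← hyp, hxp, mul_one]))
  have hyfin : IsOfFinOrder y := (Monoid.exponent_ne_zero.1 hexp).isOfFinOrder
  exact ⟨⟨x, x', hx⟩, ⟨y, y', hy⟩, fun h => hne (congrArg Subtype.val h),
    fun h => (diffGraph_adj.1 h).not_orderOf_dvd hyfin hdvd,
    diffGraph_commonNeighbors_eq_empty hexp hp hxp hyp⟩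

end DistantVertices

theorem nilpotent_diffGraph_diam_eq_two_iff_general {G : Type*} [Group G]
    (hG : CoprimeOrdersCommute G) (hexp : 1 < Monoid.exponent G)
    (hpp : ¬ IsPrimePow (Monoid.exponent G)) :
    (diffGraph G).diam = 2 ↔ Squarefree (Monoid.exponent G) := by
  rw [diam_eq_two_iff]
  constructor
  · rintro ⟨-, hcommon⟩
    by_contra hsq
    obtain ⟨u, v, huv, hadj, hempty⟩ :=
      hG.exists_diffGraph_commonNeighbors_eq_empty (by lia) hpp hsq
    exact (hcommon u v huv hadj).ne_empty hempty
  · exact fun hsq => ⟨hG.exists_ne_not_diffGraph_adj hexp hpp,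
      fun _ _ _ huv => hG.diffGraph_commonNeighbors_nonempty hsq huv⟩

/-- Lemma 5.8: for a finite non-cyclic nilpotent group `G` whose order is not a prime
power, `diam(𝒟(G)) = 2` iff the exponent of `G` is square-free. -/
theorem nilpotent_diffGraph_diam_eq_two_iff
    (G : Type*) [Group G] [Finite G] (hnil : Group.IsNilpotent G)
    (hnc : ¬ IsCyclic G) (hpp : ¬ IsPrimePow (Nat.card G)) :
    (diffGraph G).diam = 2 ↔ Squarefree (Monoid.exponent G) := by
  have : Nontrivial G := not_subsingleton_iff_nontrivial.1 fun _ => hnc inferInstance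
  exact nilpotent_diffGraph_diam_eq_two_iff_general coprimeOrdersCommute_of_isNilpotent
    Monoid.one_lt_exponent (mt isPrimePow_card_of_isPrimePow_exponent hpp)
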